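/- arXiv:1403.0418 — 2 statements merged into one kernel-verified Lean document; each statement's English description precedes it below -/
import Mathlib

section
/- Let ρ be a two-qubit state (4×4 positive semidefinite complex matrix of unit trace), and let λ₁ ≥ λ₂ ≥ λ₃ ≥ λ₄ ≥ 0 be nonnegative reals such that the characteristic polynomial of ρ·ρ̂ equals ∏ᵢ (X − λᵢ²). Then λ₁ − λ₂ − λ₃ − λ₄ ≤ |det Θ(ρ)|^{1/4}; that is, the concurrence is bounded by the obesity: C(ρ) ≤ Ω(ρ) = |det Θ(ρ)|^{1/4}, equivalently C(ρ) ≤ γ_b^{−1}(3V_A/(4π))^{1/4} when ‖b‖ < 1. -/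
open Matrix Kronecker Polynomial
open scoped ComplexOrder

noncomputable section

/-- The Pauli matrices: `pauli 0 = I₂`, `pauli 1 = σ₁`, `pauli 2 = σ₂`, `pauli 3 = σ₃`. -/
def pauli : Fin 4 → Matrix (Fin 2) (Fin 2) ℂ
  | 0 => !![1, 0; 0, 1]
  | 1 => !![0, 1; 1, 0]
  | 2 => !![0, -Complex.I; Complex.I, 0]
  | 3 => !![1, 0; 0, -1]

/-- Euclidean norm of a vector in ℝ³. -/
def norm3 (v : Fin 3 → ℝ) : ℝ := Real.sqrt (∑ i, v i ^ 2)

/-- The canonical axis-aligned two-qubit operator with steering-ellipsoid centre `c`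
and signed semiaxes `t`:
`ρ̃(c,t) = (1/4)(I₄ + Σᵢ cᵢ (σᵢ⊗σ₀) + Σᵢ tᵢ (σᵢ⊗σᵢ))`. -/
def rhoTilde (c t : Fin 3 → ℝ) : Matrix (Fin 2 × Fin 2) (Fin 2 × Fin 2) ℂ :=
  (1 / 4 : ℂ) • ((1 : Matrix (Fin 2 × Fin 2) (Fin 2 × Fin 2) ℂ)
    + ∑ i : Fin 3, (c i : ℂ) • (pauli i.succ ⊗ₖ pauli 0)
    + ∑ i : Fin 3, (t i : ℂ) • (pauli i.succ ⊗ₖ pauli i.succ))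

/-- The Pauli-basis expansion matrix `Θ(ρ)_{μν} = Re tr(ρ (σ_μ ⊗ σ_ν))`. -/
def Theta (ρ : Matrix (Fin 2 × Fin 2) (Fin 2 × Fin 2) ℂ) : Matrix (Fin 4) (Fin 4) ℝ :=
  Matrix.of fun μ ν => ((ρ * (pauli μ ⊗ₖ pauli ν)).trace).re

/-- The spin-flipped matrix `ρ̂ = (σ₂⊗σ₂)·conj(ρ)·(σ₂⊗σ₂)`. -/
def spinFlip (ρ : Matrix (Fin 2 × Fin 2) (Fin 2 × Fin 2) ℂ) :
    Matrix (Fin 2 × Fin 2) (Fin 2 × Fin 2) ℂ :=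
  (pauli 2 ⊗ₖ pauli 2) * ρ.map (starRingEnd ℂ) * (pauli 2 ⊗ₖ pauli 2)

/-- Explicit `4×4` determinant. -/
lemma det4 {R : Type*} [CommRing R] (A : Matrix (Fin 4) (Fin 4) R) :
    A.det = A 0 0 * (A 1 1 * (A 2 2 * A 3 3 - A 2 3 * A 3 2) - A 1 2 * (A 2 1 * A 3 3 - A 2 3 * A 3 1)
        + A 1 3 * (A 2 1 * A 3 2 - A 2 2 * A 3 1))
      - A 0 1 * (A 1 0 * (A 2 2 * A 3 3 - A 2 3 * A 3 2) - A 1 2 * (A 2 0 * A 3 3 - A 2 3 * A 3 0)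
        + A 1 3 * (A 2 0 * A 3 2 - A 2 2 * A 3 0))
      + A 0 2 * (A 1 0 * (A 2 1 * A 3 3 - A 2 3 * A 3 1) - A 1 1 * (A 2 0 * A 3 3 - A 2 3 * A 3 0)
        + A 1 3 * (A 2 0 * A 3 1 - A 2 1 * A 3 0))
      - A 0 3 * (A 1 0 * (A 2 1 * A 3 2 - A 2 2 * A 3 1) - A 1 1 * (A 2 0 * A 3 2 - A 2 2 * A 3 0)
        + A 1 2 * (A 2 0 * A 3 1 - A 2 1 * A 3 0)) := by
  rw [Matrix.det_succ_row_zero]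
  simp [Fin.sum_univ_succ, Matrix.det_fin_three, Fin.succAbove]
  ring

/-- Second elementary symmetric function of the eigenvalues, via determinants. -/
lemma e2_identity (M : Matrix (Fin 4) (Fin 4) ℂ) :
    M.trace ^ 2 - (M * M).trace = (1 - M).det + (-1 - M).det - 2 - 2 * M.det := by
  simp only [det4, Matrix.trace, Matrix.diag, Matrix.mul_apply, Fin.sum_univ_four, Matrix.sub_apply,
    Matrix.neg_apply, Matrix.one_apply]
  simp
  ring

/-- The equivalence of index types. -/
def idx : Fin 4 ≃ Fin 2 × Fin 2 :=
  (finProdFinEquiv (m := 2) (n := 2)).symm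

lemma idx0 : idx 0 = (0, 0) := by decide
lemma idx1 : idx 1 = (0, 1) := by decide
lemma idx2 : idx 2 = (1, 0) := by decide
lemma idx3 : idx 3 = (1, 1) := by decide

/-- Pauli change of basis. -/
def pmat : Matrix (Fin 4) (Fin 4) ℂ := Matrix.of fun μ k => pauli μ (idx k).2 (idx k).1

/-- Realigned matrix. -/
def realign (ρ : Matrix (Fin 2 × Fin 2) (Fin 2 × Fin 2) ℂ) : Matrix (Fin 4) (Fin 4) ℂ :=
  Matrix.of fun k l => ρ ((idx k).1, (idx l).1) ((idx k).2, (idx l).2)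

lemma pmat_det : pmat.det ^ 2 = -16 := by
  have : pmat.det = 4 * Complex.I ∨ pmat.det = - (4 * Complex.I) := by
    rw [det4]
    simp [pmat, pauli, idx0, idx1, idx2, idx3]
    ring_nf
    simp
  rcases this with h | h <;> rw [h] <;> ring_nf <;> simp

lemma theta_eq (ρ : Matrix (Fin 2 × Fin 2) (Fin 2 × Fin 2) ℂ) :
    (Matrix.of fun μ ν => (ρ * (pauli μ ⊗ₖ pauli ν)).trace) = pmat * realign ρ * pmatᵀ := by
  ext μ ν
  simp only [Matrix.of_apply, Matrix.trace, Matrix.diag, Matrix.mul_apply, Fintype.sum_prod_type,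
    Fin.sum_univ_four, Fin.sum_univ_two, pmat, realign, idx0, idx1, idx2, idx3, Matrix.transpose_apply,
    Matrix.kroneckerMap_apply]
  ring

lemma theta_det (ρ : Matrix (Fin 2 × Fin 2) (Fin 2 × Fin 2) ℂ) (h : ρ.IsHermitian) :
    (((Theta ρ).det : ℝ) : ℂ) = -16 * (realign ρ).det := by
  have hp : ∀ μ, (pauli μ)ᴴ = pauli μ := by
    intro μ
    ext i j
    fin_cases μ <;> fin_cases i <;> fin_cases j <;> simp [pauli]
  have h1 : (Theta ρ).map Complex.ofRealHom
      = (Matrix.of fun μ ν => (ρ * (pauli μ ⊗ₖ pauli ν)).trace) := by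
    ext μ ν
    simp only [Theta, Matrix.map_apply, Matrix.of_apply, Complex.ofRealHom_eq_coe]
    apply Complex.conj_eq_iff_re.1
    have := Matrix.trace_conjTranspose (ρ * (pauli μ ⊗ₖ pauli ν))
    rw [Matrix.conjTranspose_mul, Matrix.conjTranspose_kronecker, hp, hp, h.eq,
      Matrix.trace_mul_comm] at this
    exact this.symm
  have h2 := RingHom.map_det Complex.ofRealHom (Theta ρ)
  rw [RingHom.mapMatrix_apply, h1, theta_eq, Matrix.det_mul, Matrix.det_mul, Matrix.det_transpose] at h2
  rw [← pmat_det, ← Complex.ofRealHom_eq_coe, h2]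
  ring

/-- The key polynomial identity. -/
lemma key_identity (ρ : Matrix (Fin 2 × Fin 2) (Fin 2 × Fin 2) ℂ) (h : ρ.IsHermitian) :
    16 * (realign ρ).det = 2 * ((ρ * spinFlip ρ) * (ρ * spinFlip ρ)).trace
      - (ρ * spinFlip ρ).trace ^ 2 + 8 * ρ.det := by
  have hs : spinFlip ρ = (pauli 2 ⊗ₖ pauli 2) * ρᵀ * (pauli 2 ⊗ₖ pauli 2) := by
    have : ρ.map (starRingEnd ℂ) = ρᵀ := by
      ext i j
      exact h.apply j i
    rw [spinFlip, this]
  have hsp : ∀ a b c d : Fin 2, spinFlip ρ (a, b) (c, d) =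
      (-1) ^ (a.val + b.val + c.val + d.val) * ρ (1 - c, 1 - d) (1 - a, 1 - b) := by
    intro a b c d
    rw [hs]
    fin_cases a <;> fin_cases b <;> fin_cases c <;> fin_cases d <;>
    simp [Matrix.mul_apply, Fintype.sum_prod_type, pauli] <;> norm_num
  have hd : ρ.det = (ρ.submatrix idx idx).det := (Matrix.det_submatrix_equiv_self idx ρ).symm
  rw [hd, det4, det4]
  simp only [Matrix.submatrix_apply, idx0, idx1, idx2, idx3, realign, Matrix.of_apply, Matrix.trace,
    Matrix.diag, Matrix.mul_apply, Fintype.sum_prod_type, Fin.sum_univ_two, hsp]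
  simp
  ring

lemma final_ineq (a b c d : ℝ) (h01 : b ≤ a) (h12 : c ≤ b) (h23 : d ≤ c) (h3 : 0 ≤ d) :
    a - b - c - d ≤ |2 * (a ^ 4 + b ^ 4 + c ^ 4 + d ^ 4) - (a ^ 2 + b ^ 2 + c ^ 2 + d ^ 2) ^ 2
      + 8 * (a * b * c * d)| ^ ((1 : ℝ) / 4) := by
  by_cases h : a - b - c - d ≤ 0
  · exact h.trans (by positivity)
  push Not at h
  set x := a - b - c - d with hx
  have e : 2 * (a ^ 4 + b ^ 4 + c ^ 4 + d ^ 4) - (a ^ 2 + b ^ 2 + c ^ 2 + d ^ 2) ^ 2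
      + 8 * (a * b * c * d)
      = (a + b + c + d) * (a + b - c - d) * ((a - b + c - d) * (a - b - c + d)) := by ring
  have hle : x ^ 4 ≤ (a + b + c + d) * (a + b - c - d) * ((a - b + c - d) * (a - b - c + d)) := by
    calc x ^ 4 = x * x * (x * x) := by ring
      _ ≤ _ := by 
          have h4 : x * x ≤ (a + b + c + d) * (a + b - c - d) :=
            mul_le_mul (by linarith) (by linarith) h.le (by linarith)
          have h5 : x * x ≤ (a - b + c - d) * (a - b - c + d) :=
            mul_le_mul (by linarith) (by linarith) h.le (by linarith)
          exact mul_le_mul h4 h5 (by positivity) ((by positivity : 0 ≤ x * x).trans h4)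
  rw [e]
  calc x = (x ^ 4) ^ ((1 : ℝ) / 4) := by
        rw [← Real.rpow_natCast, ← Real.rpow_mul h.le]; norm_num
    _ ≤ _ := by
        apply Real.rpow_le_rpow (by positivity) (hle.trans (le_abs_self _)) (by norm_num)

/-- Concurrence is bounded by obesity: `C(ρ) ≤ |det Θ(ρ)|^{1/4}` for any two-qubit
state `ρ`, where the λᵢ are the square roots of the eigenvalues of `ρρ̂` in
non-increasing order. -/
theorem stmt12 (ρ : Matrix (Fin 2 × Fin 2) (Fin 2 × Fin 2) ℂ)
    (hpsd : ρ.PosSemidef) (htr : ρ.trace = 1)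
    (lam : Fin 4 → ℝ)
    (h01 : lam 1 ≤ lam 0) (h12 : lam 2 ≤ lam 1) (h23 : lam 3 ≤ lam 2) (h3 : 0 ≤ lam 3)
    (hchar : (ρ * spinFlip ρ).charpoly = ∏ i : Fin 4, (X - C ((lam i : ℂ) ^ 2))) :
    lam 0 - lam 1 - lam 2 - lam 3 ≤ |(Theta ρ).det| ^ ((1 : ℝ) / 4) := by
  have hH := hpsd.isHermitian
  set M := ρ * spinFlip ρ with hM
  have hev : ∀ t : ℂ, (Matrix.scalar _ t - M).det = ∏ i : Fin 4, (t - (lam i : ℂ) ^ 2) := by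
    intro t
    rw [← Matrix.eval_charpoly, hchar, Polynomial.eval_prod]
    simp
  have htrM : M.trace = ∑ i : Fin 4, (lam i : ℂ) ^ 2 := by
    have h : (∏ i : Fin 4, (X - C ((lam i : ℂ) ^ 2)))
        = (((Finset.univ : Finset (Fin 4)).val.map (fun i => (lam i : ℂ) ^ 2)).map
            (fun a => X - C a)).prod := by
      rw [Multiset.map_map]; rfl
    rw [Matrix.trace_eq_sum_roots_charpoly, hchar, h, Polynomial.roots_multiset_prod_X_sub_C]
    rfl
  have hM0 : M.det = ∏ i : Fin 4, (lam i : ℂ) ^ 2 := by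
    have := hev 0
    simpa [Matrix.det_neg, Fin.prod_univ_four, show (-1 : ℂ) ^ 4 = 1 by norm_num] using this
  have hp : (M.submatrix idx idx).det = M.det := Matrix.det_submatrix_equiv_self idx M
  have htrM2 : M.trace ^ 2 - (M * M).trace
      = (∏ i : Fin 4, (1 - (lam i : ℂ) ^ 2)) + (∏ i : Fin 4, (-1 - (lam i : ℂ) ^ 2)) - 2
        - 2 * ∏ i : Fin 4, (lam i : ℂ) ^ 2 := by
    have h := e2_identity (M.submatrix idx idx)
    have h1 : (1 - M.submatrix idx idx) = (Matrix.scalar _ 1 - M).submatrix idx idx := by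
      rw [Matrix.submatrix_sub]; simp
    have h2 : (-1 - M.submatrix idx idx) = (Matrix.scalar _ (-1) - M).submatrix idx idx := by
      rw [Matrix.submatrix_sub, map_neg, map_one, Matrix.submatrix_neg]; simp
    have ht : ∀ N : Matrix (Fin 2 × Fin 2) (Fin 2 × Fin 2) ℂ,
        (N.submatrix idx idx).trace = N.trace := by
      intro N
      simp only [Matrix.trace, Matrix.diag, Matrix.submatrix_apply]
      exact Equiv.sum_comp idx (fun i => N i i)
    rw [Matrix.submatrix_mul_equiv, ht, ht, h1, h2, Matrix.det_submatrix_equiv_self,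
      Matrix.det_submatrix_equiv_self, Matrix.det_submatrix_equiv_self, hev, hev, hM0] at h
    exact h
  have hdet : ρ.det = ((lam 0 * lam 1 * lam 2 * lam 3 : ℝ) : ℂ) := by
    have hflip : (spinFlip ρ).det = ρ.det := by
      have hc : ρ.map (starRingEnd ℂ) = ρᵀ := by
        ext i j
        exact hH.apply j i
      have h2 : (pauli 2).det = -1 := by simp [pauli]
      rw [spinFlip, hc, Matrix.det_mul, Matrix.det_mul, Matrix.det_transpose, Matrix.det_kronecker, h2]
      simp
    have hnn := hpsd.det_nonneg
    obtain ⟨hre, him⟩ := Complex.nonneg_iff.1 hnn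
    have hr : ρ.det = ((ρ.det.re : ℝ) : ℂ) := Complex.ext (by simp) (by simp [← him])
    have hsq : ρ.det ^ 2 = ((lam 0 * lam 1 * lam 2 * lam 3 : ℝ) : ℂ) ^ 2 := by
      have : M.det = ρ.det ^ 2 := by rw [hM, Matrix.det_mul, hflip, sq]
      rw [← this, hM0, Fin.prod_univ_four]
      push_cast
      ring
    rw [hr] at hsq ⊢
    norm_cast at hsq ⊢
    have h2 := h3.trans h23
    have h1 := h2.trans h12
    have h0 := h1.trans h01
    exact (sq_eq_sq₀ hre (by positivity)).1 hsq
  have hT : (Theta ρ).det = -(2 * (lam 0 ^ 4 + lam 1 ^ 4 + lam 2 ^ 4 + lam 3 ^ 4)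
      - (lam 0 ^ 2 + lam 1 ^ 2 + lam 2 ^ 2 + lam 3 ^ 2) ^ 2
      + 8 * (lam 0 * lam 1 * lam 2 * lam 3)) := by
    have h1 := theta_det ρ hH
    have h2 := key_identity ρ hH
    rw [← hM, hdet] at h2
    have h4 : (M * M).trace = M.trace ^ 2 - (M.trace ^ 2 - (M * M).trace) := by ring
    rw [htrM2] at h4
    rw [h4, htrM] at h2
    simp only [Fin.prod_univ_four, Fin.sum_univ_four] at h2
    have h5 : (((Theta ρ).det : ℝ) : ℂ) = ((-(2 * (lam 0 ^ 4 + lam 1 ^ 4 + lam 2 ^ 4 + lam 3 ^ 4)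
      - (lam 0 ^ 2 + lam 1 ^ 2 + lam 2 ^ 2 + lam 3 ^ 2) ^ 2
      + 8 * (lam 0 * lam 1 * lam 2 * lam 3)) : ℝ) : ℂ) := by
      rw [h1, neg_mul, h2]
      push_cast
      ring
    exact_mod_cast h5
  rw [hT, abs_neg]
  exact final_ineq _ _ _ _ h01 h12 h23 h3
end
end

section
/- Let ρ be a two-qubit state (4×4 positive semidefinite complex matrix of unit trace) with ‖b‖ < 1, and let λ₁ ≥ λ₂ ≥ λ₃ ≥ λ₄ ≥ 0 be nonnegative reals such that the characteristic polynomial of ρ·ρ̂ equals ∏ᵢ (X − λᵢ²). Then λ₁ − λ₂ − λ₃ − λ₄ ≤ √(1 − ‖b‖²)·√(1 − ‖c_A‖), and in particular C(ρ) ≤ √(1 − ‖c_A‖): the concurrence of any two-qubit state whose steering ellipsoid has centre of norm c is at most √(1 − c). -/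
open Matrix Kronecker Polynomial
open scoped ComplexOrder

noncomputable section

lemma nonneg_real {n : ℕ} (x : Fin n → ℂ) : ∃ s : ℝ, 0 ≤ s ∧ star x ⬝ᵥ x = (s : ℂ) := by
  refine ⟨∑ i, ‖x i‖ ^ 2, by positivity, ?_⟩
  simp [dotProduct, Complex.conj_mul']

lemma pos_real {n : ℕ} (x : Fin n → ℂ) (hx : x ≠ 0) :
    ∃ s : ℝ, 0 < s ∧ star x ⬝ᵥ x = (s : ℂ) := by
  obtain ⟨s, hs, h⟩ := nonneg_real x
  refine ⟨s, lt_of_le_of_ne hs ?_, h⟩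
  rintro rfl
  exact hx (dotProduct_star_self_eq_zero.mp (by simpa using h))

lemma takagi_step {n k : ℕ} (τ : Matrix (Fin n) (Fin n) ℂ) (hτ : τᵀ = τ)
    (v : Fin k → Fin n → ℂ) (d : Fin k → ℝ) (hd : ∀ i, τ *ᵥ v i = (d i : ℂ) • star (v i))
    (hk : k < n) :
    ∃ (u : Fin n → ℂ) (l : ℝ), 0 ≤ l ∧ τ *ᵥ u = (l : ℂ) • star u ∧ star u ⬝ᵥ u = 1 ∧
      ∀ i, star (v i) ⬝ᵥ u = 0 := by
  have hsym : ∀ x y : Fin n → ℂ, x ⬝ᵥ (τ *ᵥ y) = (τ *ᵥ x) ⬝ᵥ y := by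
    intro x y
    rw [dotProduct_mulVec, ← mulVec_transpose, hτ]
  -- the antilinear map
  have hJ : ∀ (x : Fin n → ℂ) i, star (v i) ⬝ᵥ x = 0 → star (v i) ⬝ᵥ star (τ *ᵥ x) = 0 := by
    intro x i h
    have : star (v i) ⬝ᵥ star (τ *ᵥ x) = star (v i ⬝ᵥ (τ *ᵥ x)) := by
      rw [star_dotProduct_star, dotProduct_comm]
    rw [this, hsym, hd, smul_dotProduct, h]; simp
  let L : (Fin n → ℂ) →ₗ[ℂ] (Fin k → ℂ) := Matrix.mulVecLin (Matrix.of fun i => star (v i))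
  have hL : ∀ x, x ∈ LinearMap.ker L ↔ ∀ i, star (v i) ⬝ᵥ x = 0 := by
    intro x
    rw [LinearMap.mem_ker]
    constructor
    · intro h i; exact congrFun h i
    · intro h; funext i; exact h i
  have hne : LinearMap.ker L ≠ ⊥ := LinearMap.ker_ne_bot_of_finrank_lt (by simpa using hk)
  let T : (Fin n → ℂ) →ₗ[ℂ] (Fin n → ℂ) := Matrix.mulVecLin (τ.map star * τ)
  have hT : ∀ x, T x = star (τ *ᵥ star (τ *ᵥ x)) := by
    intro x
    simp only [T, mulVecLin_apply, ← mulVec_mulVec]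
    funext i
    simp [mulVec, dotProduct, Matrix.map_apply]
  have hTW : ∀ x ∈ LinearMap.ker L, T x ∈ LinearMap.ker L := by
    intro x hx
    rw [hL] at hx ⊢
    intro i
    rw [hT]
    exact hJ _ i (hJ _ i (hx i))
  have : Nontrivial (LinearMap.ker L) := Submodule.nontrivial_iff_ne_bot.mpr hne
  obtain ⟨μ, hμ⟩ := Module.End.exists_eigenvalue (T.restrict hTW)
  obtain ⟨⟨x, hxW⟩, hx⟩ := hμ.exists_hasEigenvector
  have hx0 : x ≠ 0 := by
    intro h; apply hx.2; simp [h]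
  have hTx : T x = μ • x := by
    have := congrArg Subtype.val hx.apply_eq_smul
    simpa using this
  rw [hT] at hTx
  rw [hL] at hxW
  set y := star (τ *ᵥ x) with hy
  have hτy : τ *ᵥ y = star μ • star x := by
    rw [← star_star (τ *ᵥ y), hTx, star_smul]
  obtain ⟨s, hs, hxx⟩ := pos_real x hx0
  have hmu : ∃ l : ℝ, 0 ≤ l ∧ μ = (l : ℂ) ^ 2 := by
    obtain ⟨r, hr, hrr⟩ := nonneg_real (τ *ᵥ x)
    have h1 : star x ⬝ᵥ star (τ *ᵥ y) = μ * s := by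
      rw [hTx, dotProduct_smul, hxx, smul_eq_mul]
    have h2 : star x ⬝ᵥ star (τ *ᵥ y) = (r : ℂ) := by
      rw [star_dotProduct_star, ← hsym, hy, hrr]
      simp
    refine ⟨Real.sqrt (r / s), Real.sqrt_nonneg _, ?_⟩
    rw [← Complex.ofReal_pow, Real.sq_sqrt (by positivity)]
    have : (s : ℂ) ≠ 0 := by exact_mod_cast hs.ne'
    push_cast
    field_simp
    rw [← h1, h2]
  obtain ⟨l, hl, rfl⟩ := hmu
  have hτx : τ *ᵥ x = star y := by rw [hy, star_star]
  have hu : ∃ u : Fin n → ℂ, u ≠ 0 ∧ τ *ᵥ u = (l : ℂ) • star u ∧ ∀ i, star (v i) ⬝ᵥ u = 0 := by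
    by_cases h0 : y + (l : ℂ) • x = 0
    · refine ⟨Complex.I • x, smul_ne_zero Complex.I_ne_zero hx0, ?_, ?_⟩
      · rw [mulVec_smul, hτx, eq_neg_of_add_eq_zero_left h0]
        funext i
        simp
        ring
      · intro i; rw [dotProduct_smul, hxW i, smul_zero]
    · refine ⟨_, h0, ?_, ?_⟩
      · rw [mulVec_add, mulVec_smul, hτy, hτx]
        funext i
        simp
        ring
      · intro i; rw [dotProduct_add, dotProduct_smul, hxW i, hJ x i (hxW i)]; simp
  obtain ⟨u, hu0, hu1, hu2⟩ := hu
  obtain ⟨t, ht, htt⟩ := pos_real u hu0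
  refine ⟨((1 / Real.sqrt t : ℝ) : ℂ) • u, l, hl, ?_, ?_, ?_⟩
  · rw [mulVec_smul, hu1, star_smul, smul_comm]
    simp
  · rw [star_smul, smul_dotProduct, dotProduct_smul, htt]
    simp only [smul_eq_mul, Complex.star_def, Complex.conj_ofReal]
    norm_cast
    have : Real.sqrt t ≠ 0 := by positivity
    field_simp
    rw [Real.sq_sqrt ht.le]
  · intro i; rw [dotProduct_smul, hu2 i, smul_zero]

lemma takagi_fam {n : ℕ} (τ : Matrix (Fin n) (Fin n) ℂ) (hτ : τᵀ = τ) (k : ℕ) (hk : k ≤ n) :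
    ∃ (v : Fin k → Fin n → ℂ) (d : Fin k → ℝ), (∀ i, 0 ≤ d i) ∧
      (∀ i, τ *ᵥ v i = (d i : ℂ) • star (v i)) ∧
      ∀ i j, star (v i) ⬝ᵥ v j = if i = j then 1 else 0 := by
  induction k with
  | zero => exact ⟨fun i => i.elim0, fun i => i.elim0, fun i => i.elim0, fun i => i.elim0,
      fun i => i.elim0⟩
  | succ k ih =>
    obtain ⟨v, d, hd0, hd, ho⟩ := ih (by omega)
    obtain ⟨u, l, hl, hu, hu1, huo⟩ := takagi_step τ hτ v d hd (by omega)
    have huo' : ∀ i, star u ⬝ᵥ v i = 0 := by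
      intro i
      rw [star_dotProduct, huo i, star_zero]
    refine ⟨Fin.cons u v, Fin.cons l d, ?_, ?_, ?_⟩
    · intro i; refine Fin.cases ?_ (fun j => ?_) i <;> simp [hl, hd0]
    · intro i; refine Fin.cases ?_ (fun j => ?_) i <;> simp [hu, hd]
    · intro i j
      refine Fin.cases ?_ (fun i => ?_) i <;> refine Fin.cases ?_ (fun j => ?_) j
      · simp [hu1]
      · simp [huo', (Fin.succ_ne_zero j).symm]
      · simp [huo]
      · simp [ho]

/-- Takagi factorization. -/
lemma takagi {n : ℕ} (τ : Matrix (Fin n) (Fin n) ℂ) (hτ : τᵀ = τ) :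
    ∃ (U : Matrix (Fin n) (Fin n) ℂ) (d : Fin n → ℝ), (∀ i, 0 ≤ d i) ∧ Uᴴ * U = 1 ∧
      τ = U.map star * diagonal (fun i => (d i : ℂ)) * Uᴴ := by
  obtain ⟨v, d, hd0, hd, ho⟩ := takagi_fam τ hτ n le_rfl
  have hU : (Matrix.of fun i j => v j i)ᴴ * (Matrix.of fun i j => v j i) = 1 := by
    ext i j
    rw [one_apply, ← ho i j]
    simp [mul_apply, dotProduct]
  refine ⟨Matrix.of fun i j => v j i, d, hd0, hU, ?_⟩
  have h : τ * (Matrix.of fun i j => v j i) =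
      (Matrix.of fun i j => v j i).map star * diagonal (fun i => (d i : ℂ)) := by
    ext i j
    rw [mul_diagonal]
    have := congrFun (hd j) i
    simp only [mulVec, dotProduct] at this
    simp [mul_apply, this, mul_comm]
  rw [← h, Matrix.mul_assoc, mul_eq_one_comm.mp hU, Matrix.mul_one]

lemma conc_aux (τ : Matrix (Fin 4) (Fin 4) ℂ) (hτ : τᵀ = τ) (lam : Fin 4 → ℝ)
    (hl : ∀ i, 0 ≤ lam i)
    (hchar : (τ.map star * τ).charpoly = ∏ i : Fin 4, (X - C ((lam i : ℂ) ^ 2))) :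
    lam 0 - lam 1 - lam 2 - lam 3 ≤ ∑ i, ‖τ i i‖ := by
  obtain ⟨U, d, hd0, hU, hτU⟩ := takagi τ hτ
  have hU' : U * Uᴴ = 1 := mul_eq_one_comm.mp hU
  have hUm : Uᵀ * U.map star = 1 := by
    rw [← transpose_one, ← hU, transpose_mul]
    rfl
  have hm : τ.map star * τ = U * (diagonal (fun i => ((d i : ℂ)) ^ 2) * Uᴴ) := by
    have h1 : τ.map star = U * diagonal (fun i => (d i : ℂ)) * Uᵀ := by
      conv_lhs => rw [hτU]
      ext i j
      simp [mul_apply, Matrix.map_apply, diagonal_apply]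
    have h2 : diagonal (fun i => ((d i : ℂ)) ^ 2) =
        diagonal (fun i => (d i : ℂ)) * diagonal (fun i => (d i : ℂ)) := by
      rw [diagonal_mul_diagonal]; simp only [pow_two]
    rw [h1]
    conv_lhs => rw [hτU]
    rw [h2]
    calc _ = U * diagonal (fun i => (d i : ℂ)) * (Uᵀ * U.map star) *
          diagonal (fun i => (d i : ℂ)) * Uᴴ := by simp only [Matrix.mul_assoc]
      _ = _ := by rw [hUm]; simp only [Matrix.mul_assoc, Matrix.one_mul]
  have hch : ∏ i : Fin 4, (X - C ((d i : ℂ) ^ 2)) = ∏ i : Fin 4, (X - C ((lam i : ℂ) ^ 2)) := by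
    rw [← hchar, hm, charpoly_mul_comm, Matrix.mul_assoc, hU, Matrix.mul_one, charpoly_diagonal]
  have hms : (Finset.univ.val.map d) = (Finset.univ.val.map lam) := by
    have h := congrArg Polynomial.roots hch
    have hr : ∀ f : Fin 4 → ℂ, (∏ i, (X - C (f i))).roots = Finset.univ.val.map f := by
      intro f
      rw [← roots_multiset_prod_X_sub_C (Finset.univ.val.map f), Multiset.map_map]
      rfl
    rw [hr, hr] at h
    have h' := congrArg (Multiset.map (fun z : ℂ => Real.sqrt z.re)) h
    rw [Multiset.map_map, Multiset.map_map] at h'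
    have hs : ∀ f : Fin 4 → ℝ, (∀ i, 0 ≤ f i) →
        ((fun z : ℂ => Real.sqrt z.re) ∘ fun i => (f i : ℂ) ^ 2) = f := by
      intro f hf
      funext i
      simp only [Function.comp]
      rw [← Complex.ofReal_pow, Complex.ofReal_re, Real.sqrt_sq (hf i)]
    rwa [hs d hd0, hs lam hl] at h'
  have hsum : ∑ i, d i = ∑ i, lam i := congrArg Multiset.sum hms
  obtain ⟨j0, hj0⟩ : ∃ j, d j = lam 0 := by
    have : lam 0 ∈ Finset.univ.val.map d := by
      rw [hms]; exact Multiset.mem_map_of_mem _ (Finset.mem_univ_val 0)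
    obtain ⟨j, -, hj⟩ := Multiset.mem_map.mp this
    exact ⟨j, hj⟩
  have hcol : ∀ j, ∑ i, ‖U i j‖ ^ 2 = 1 := by
    intro j
    have := congrFun (congrFun hU j) j
    simp only [mul_apply, conjTranspose_apply, one_apply_eq, Complex.star_def,
      Complex.conj_mul'] at this
    exact_mod_cast this
  have hii : ∀ i, 2 * (d j0 * ‖U i j0‖ ^ 2) - ∑ j, d j * ‖U i j‖ ^ 2 ≤ ‖τ i i‖ := by
    intro i
    have h1 : τ i i = ∑ j, (d j : ℂ) * (star (U i j)) ^ 2 := by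
      conv_lhs => rw [hτU]
      rw [mul_apply]
      refine Finset.sum_congr rfl fun j _ => ?_
      rw [mul_diagonal]
      simp
      ring
    have h2 := Finset.add_sum_erase Finset.univ (fun j => (d j : ℂ) * (star (U i j)) ^ 2)
      (Finset.mem_univ j0)
    have h3 := Finset.add_sum_erase Finset.univ (fun j => d j * ‖U i j‖ ^ 2)
      (Finset.mem_univ j0)
    have hn : ∀ j, ‖(d j : ℂ) * (star (U i j)) ^ 2‖ = d j * ‖U i j‖ ^ 2 := by
      intro j
      simp [abs_of_nonneg (hd0 j)]
    have h4 := norm_sum_le (Finset.univ.erase j0) (fun j => (d j : ℂ) * (star (U i j)) ^ 2)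
    simp only [hn] at h4
    have h5 := norm_sub_norm_le ((d j0 : ℂ) * (star (U i j0)) ^ 2)
      (-(∑ j ∈ Finset.univ.erase j0, (d j : ℂ) * (star (U i j)) ^ 2))
    rw [sub_neg_eq_add, norm_neg, hn, h2, ← h1] at h5
    linarith
  have hfin := Finset.sum_le_sum (fun i (_ : i ∈ Finset.univ) => hii i)
  rw [Finset.sum_sub_distrib, ← Finset.mul_sum, ← Finset.mul_sum, hcol, Finset.sum_comm] at hfin
  simp only [← Finset.mul_sum, hcol, mul_one] at hfin
  rw [hsum, hj0, Fin.sum_univ_four] at hfin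
  linarith
open scoped MatrixOrder Matrix.Norms.L2Operator in
lemma psd_factor (ρ : Matrix (Fin 2 × Fin 2) (Fin 2 × Fin 2) ℂ) (hpsd : ρ.PosSemidef) :
    ∃ V1 : Matrix (Fin 2 × Fin 2) (Fin 2 × Fin 2) ℂ, ρ = V1 * V1ᴴ := by
  obtain ⟨B, hB⟩ := CStarAlgebra.nonneg_iff_eq_star_mul_self.mp hpsd.nonneg
  exact ⟨star B, by rw [hB, ← star_eq_conjTranspose, star_star]⟩

lemma S_entries (p q : Fin 2 × Fin 2) : (pauli 2 ⊗ₖ pauli 2) p q =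
    if p = (0,0) ∧ q = (1,1) then -1 else if p = (1,1) ∧ q = (0,0) then -1 else
    if p = (0,1) ∧ q = (1,0) then 1 else if p = (1,0) ∧ q = (0,1) then 1 else 0 := by
  obtain ⟨i, j⟩ := p
  obtain ⟨k, l⟩ := q
  fin_cases i <;> fin_cases j <;> fin_cases k <;> fin_cases l <;> simp [pauli, kroneckerMap_apply]

lemma S_transpose : (pauli 2 ⊗ₖ pauli 2)ᵀ = pauli 2 ⊗ₖ pauli 2 := by
  ext ⟨i, j⟩ ⟨k, l⟩
  fin_cases i <;> fin_cases j <;> fin_cases k <;> fin_cases l <;> simp [pauli, kroneckerMap_apply]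

lemma S_star : (pauli 2 ⊗ₖ pauli 2).map star = pauli 2 ⊗ₖ pauli 2 := by
  ext ⟨i, j⟩ ⟨k, l⟩
  fin_cases i <;> fin_cases j <;> fin_cases k <;> fin_cases l <;> simp [pauli, kroneckerMap_apply]

lemma conc_bound (ρ : Matrix (Fin 2 × Fin 2) (Fin 2 × Fin 2) ℂ)
    (V : Matrix (Fin 2 × Fin 2) (Fin 4) ℂ) (hV : ρ = V * Vᴴ) (lam : Fin 4 → ℝ)
    (hl : ∀ i, 0 ≤ lam i)
    (hchar : (ρ * spinFlip ρ).charpoly = ∏ i : Fin 4, (X - C ((lam i : ℂ) ^ 2))) :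
    lam 0 - lam 1 - lam 2 - lam 3 ≤ ∑ i, ‖(Vᵀ * (pauli 2 ⊗ₖ pauli 2) * V) i i‖ := by
  apply conc_aux _ _ _ hl
  · rw [← hchar]
    have h1 : (Vᵀ * (pauli 2 ⊗ₖ pauli 2) * V).map star
        = Vᴴ * (pauli 2 ⊗ₖ pauli 2) * V.map star := by
      have hmap : ∀ {l m n : Type} [Fintype m] (A : Matrix l m ℂ) (B : Matrix m n ℂ),
          (A * B).map star = A.map star * B.map star := by
        intro l m n _ A B
        exact Matrix.map_mul (f := starRingEnd ℂ)
      rw [hmap, hmap, S_star]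
      rfl
    have h2 : ρ * spinFlip ρ = V * (Vᴴ * (pauli 2 ⊗ₖ pauli 2) * V.map star *
        (Vᵀ * (pauli 2 ⊗ₖ pauli 2))) := by
      have h3 : ρ.map (starRingEnd ℂ) = V.map star * Vᵀ := by
        rw [hV, Matrix.map_mul]
        congr 1
        ext i j
        simp
      rw [spinFlip, h3]
      conv_lhs => rw [hV]
      simp only [Matrix.mul_assoc]
    rw [h1, h2, charpoly_mul_comm_of_le V _ (by simp)]
    simp only [Fintype.card_prod, Fintype.card_fin, Nat.reduceMul, Nat.sub_self, pow_zero, one_mul]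
    simp only [Matrix.mul_assoc]
  · rw [transpose_mul, transpose_mul, S_transpose, transpose_transpose, Matrix.mul_assoc]

lemma spectral' {n : ℕ} (A : Matrix (Fin n) (Fin n) ℂ) (hA : A.IsHermitian) :
    ∃ (Q : Matrix (Fin n) (Fin n) ℂ) (d : Fin n → ℝ), Qᴴ * Q = 1 ∧
      A * Q = Q * diagonal (fun i => (d i : ℂ)) := by
  have hQ : (hA.eigenvectorUnitary : Matrix (Fin n) (Fin n) ℂ)ᴴ * hA.eigenvectorUnitary = 1 :=
    (Matrix.mem_unitaryGroup_iff'.mp hA.eigenvectorUnitary.2)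
  refine ⟨hA.eigenvectorUnitary, hA.eigenvalues, hQ, ?_⟩
  have h := hA.spectral_theorem
  rw [Unitary.conjStarAlgAut_apply] at h
  have h2 := congrArg (fun M => M * (hA.eigenvectorUnitary : Matrix (Fin n) (Fin n) ℂ)) h
  refine h2.trans ?_
  rw [Matrix.mul_assoc, star_eq_conjTranspose, hQ, Matrix.mul_one]
  rfl

lemma split_basis {n : ℕ} (b c : Fin n → ℂ) (h : b ⬝ᵥ star c = 0) :
    ∃ Q : Matrix (Fin n) (Fin n) ℂ, Qᴴ * Q = 1 ∧ ∀ k, (b ᵥ* Q) k * (c ᵥ* Q) k = 0 := by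
  have h' : c ⬝ᵥ star b = 0 := by
    rw [dotProduct_comm, star_dotProduct, dotProduct_comm, h, star_zero]
  let A : Matrix (Fin n) (Fin n) ℂ := vecMulVec (star b) b - vecMulVec (star c) c
  have hA : A.IsHermitian := by
    ext i j
    simp [A, vecMulVec_apply, mul_comm]
  obtain ⟨Q, d, hQ, hAQ⟩ := spectral' A hA
  refine ⟨Q, hQ, fun k => ?_⟩
  obtain ⟨s, hs, hbb⟩ := nonneg_real b
  obtain ⟨t, ht, hcc⟩ := nonneg_real c
  have hbA : b ᵥ* A = (s : ℂ) • b := by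
    rw [← hbb, dotProduct_comm]
    simp [A, vecMul_sub, vecMul_vecMulVec, h]
  have hcA : c ᵥ* A = (-t : ℂ) • c := by
    rw [← hcc, dotProduct_comm]
    simp [A, vecMul_sub, vecMul_vecMulVec, h']
  have e1 : (s : ℂ) * (b ᵥ* Q) k = (b ᵥ* Q) k * d k := by
    have : (b ᵥ* A) ᵥ* Q = (b ᵥ* Q) ᵥ* diagonal (fun i => (d i : ℂ)) := by
      rw [vecMul_vecMul, vecMul_vecMul, hAQ]
    rw [hbA, smul_vecMul] at this
    have := congrFun this k
    rwa [vecMul_diagonal] at this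
  have e2 : (-t : ℂ) * (c ᵥ* Q) k = (c ᵥ* Q) k * d k := by
    have : (c ᵥ* A) ᵥ* Q = (c ᵥ* Q) ᵥ* diagonal (fun i => (d i : ℂ)) := by
      rw [vecMul_vecMul, vecMul_vecMul, hAQ]
    rw [hcA, smul_vecMul] at this
    have := congrFun this k
    rwa [vecMul_diagonal] at this
  by_contra hne
  have hb := left_ne_zero_of_mul hne
  have hc := right_ne_zero_of_mul hne
  have f1 : (s : ℂ) = d k := mul_right_cancel₀ hb (by rw [e1, mul_comm])
  have f2 : (-t : ℂ) = d k := mul_right_cancel₀ hc (by rw [e2, mul_comm])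
  have f1' : s = d k := by exact_mod_cast f1
  have f2' : -t = d k := by exact_mod_cast f2
  have hs0 : s = 0 := by linarith
  apply hb
  have : b = 0 := dotProduct_star_self_eq_zero.mp (by rw [hbb, hs0]; simp)
  simp [this]

lemma key (ρ : Matrix (Fin 2 × Fin 2) (Fin 2 × Fin 2) ℂ) (hpsd : ρ.PosSemidef)
    (lam : Fin 4 → ℝ) (hl : ∀ i, 0 ≤ lam i)
    (hchar : (ρ * spinFlip ρ).charpoly = ∏ i : Fin 4, (X - C ((lam i : ℂ) ^ 2)))
    (R : Matrix (Fin 2 × Fin 2) (Fin 2 × Fin 2) ℂ) (δ : ℂ)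
    (hR : Rᵀ * (pauli 2 ⊗ₖ pauli 2) * R = δ • (pauli 2 ⊗ₖ pauli 2))
    (h0 : (R * ρ * Rᴴ) (0, 1) (1, 0) = 0) :
    ‖δ‖ * (lam 0 - lam 1 - lam 2 - lam 3) ≤
      2 * (Real.sqrt ((R * ρ * Rᴴ) (0, 0) (0, 0)).re *
        Real.sqrt ((R * ρ * Rᴴ) (1, 1) (1, 1)).re) := by
  obtain ⟨V1, hV1⟩ : ∃ V1 : Matrix (Fin 2 × Fin 2) (Fin 2 × Fin 2) ℂ, ρ = V1 * V1ᴴ :=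
    psd_factor ρ hpsd
  let e : Fin 4 ≃ Fin 2 × Fin 2 := (finProdFinEquiv (m := 2) (n := 2)).symm
  let V0 : Matrix (Fin 2 × Fin 2) (Fin 4) ℂ := V1.submatrix id e
  have hV0 : ρ = V0 * V0ᴴ := by
    rw [hV1, conjTranspose_submatrix, submatrix_mul_equiv, submatrix_id_id]
  have hZ0 : R * ρ * Rᴴ = (R * V0) * (R * V0)ᴴ := by
    rw [conjTranspose_mul, hV0]; simp only [Matrix.mul_assoc]
  obtain ⟨Q, hQ, hQ0⟩ := split_basis ((R * V0) (0, 1)) ((R * V0) (1, 0)) (by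
    rw [hZ0, mul_apply] at h0
    exact h0)
  have hQ' : Q * Qᴴ = 1 := mul_eq_one_comm.mp hQ
  have hV : ρ = (V0 * Q) * (V0 * Q)ᴴ := by
    rw [conjTranspose_mul, Matrix.mul_assoc, ← Matrix.mul_assoc Q, hQ', Matrix.one_mul, hV0]
  have hcb := conc_bound ρ (V0 * Q) hV lam hl hchar
  have hZ : R * ρ * Rᴴ = (R * V0 * Q) * (R * V0 * Q)ᴴ := by
    rw [hZ0, conjTranspose_mul _ Q, Matrix.mul_assoc (R * V0), ← Matrix.mul_assoc Q, hQ',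
      Matrix.one_mul]
  set Z := R * V0 * Q with hZdef
  have hz0 : ∀ k, Z (0, 1) k * Z (1, 0) k = 0 := fun k => hQ0 k
  have hrel : Zᵀ * (pauli 2 ⊗ₖ pauli 2) * Z =
      δ • ((V0 * Q)ᵀ * (pauli 2 ⊗ₖ pauli 2) * (V0 * Q)) := by
    rw [← Matrix.smul_mul, ← Matrix.mul_smul, ← hR, hZdef, Matrix.mul_assoc R, transpose_mul]
    simp only [Matrix.mul_assoc]
  have hdiag : ∀ k, ‖δ‖ * ‖((V0 * Q)ᵀ * (pauli 2 ⊗ₖ pauli 2) * (V0 * Q)) k k‖ =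
      2 * (‖Z (0, 0) k‖ * ‖Z (1, 1) k‖) := by
    intro k
    have h1 : (Zᵀ * (pauli 2 ⊗ₖ pauli 2) * Z) k k = -2 * (Z (0, 0) k * Z (1, 1) k) := by
      simp only [mul_apply, S_entries, Fintype.sum_prod_type, Fin.sum_univ_two, transpose_apply]
      simp
      linear_combination 2 * hz0 k
    rw [← norm_mul, ← smul_eq_mul, ← Matrix.smul_apply, ← hrel, h1]
    simp
  have hn : ∀ p, ∑ k, ‖Z p k‖ ^ 2 = ((R * ρ * Rᴴ) p p).re := by
    intro p
    rw [hZ, mul_apply]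
    simp only [conjTranspose_apply, Complex.star_def, Complex.mul_conj']
    rw [← Complex.ofReal_re (∑ k, ‖Z p k‖ ^ 2)]
    push_cast
    rfl
  have hcs := Real.sum_mul_le_sqrt_mul_sqrt Finset.univ (fun k => ‖Z (0, 0) k‖)
    (fun k => ‖Z (1, 1) k‖)
  rw [hn, hn] at hcs
  calc _ ≤ ‖δ‖ * ∑ i, ‖((V0 * Q)ᵀ * (pauli 2 ⊗ₖ pauli 2) * (V0 * Q)) i i‖ := by gcongr
    _ = 2 * ∑ k, (‖Z (0, 0) k‖ * ‖Z (1, 1) k‖) := by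
      rw [Finset.mul_sum, Finset.mul_sum]
      exact Finset.sum_congr rfl fun k _ => hdiag k
    _ ≤ _ := by gcongr
lemma schur2 (B : Matrix (Fin 2) (Fin 2) ℂ) :
    ∃ S : Matrix (Fin 2) (Fin 2) ℂ, Sᴴ * S = 1 ∧ (S * B * Sᴴ) 1 0 = 0 := by
  obtain ⟨μ, hμ⟩ := Module.End.exists_eigenvalue (Matrix.mulVecLin B)
  obtain ⟨x, hx⟩ := hμ.exists_hasEigenvector
  have hx1 : B *ᵥ x = μ • x := hx.apply_eq_smul
  obtain ⟨s, hs, hss⟩ := pos_real x hx.2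
  set r : ℂ := ((1 / Real.sqrt s : ℝ) : ℂ) with hr
  have hrs : r * r * s = 1 := by
    rw [hr]
    norm_cast
    have : Real.sqrt s ≠ 0 := by positivity
    field_simp
    rw [Real.sq_sqrt hs.le]
  have hrc : star r = r := by simp [hr]
  have hss' : star (x 0) * x 0 + star (x 1) * x 1 = s := by
    simpa [dotProduct, Fin.sum_univ_two] using hss
  have hB0 := congrFun hx1 0
  have hB1 := congrFun hx1 1
  simp only [mulVec, dotProduct, Fin.sum_univ_two, Pi.smul_apply, smul_eq_mul] at hB0 hB1
  have hSS : (!![r * star (x 0), r * star (x 1); -(r * x 1), r * x 0] : Matrix (Fin 2) (Fin 2) ℂ) *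
      (!![r * star (x 0), r * star (x 1); -(r * x 1), r * x 0])ᴴ = 1 := by
    ext i j
    fin_cases i <;> fin_cases j <;>
      simp [mul_apply, Fin.sum_univ_two] <;> simp only [← Complex.star_def, hrc]
    · linear_combination hrs + r * r * hss'
    · ring
    · ring
    · linear_combination hrs + r * r * hss'
  refine ⟨!![r * star (x 0), r * star (x 1); -(r * x 1), r * x 0], mul_eq_one_comm.mp hSS, ?_⟩
  simp [mul_apply, Fin.sum_univ_two, vecMul, dotProduct]
  simp only [← Complex.star_def, hrc]
  linear_combination (-r * r * x 1) * hB0 + r * r * x 0 * hB1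

lemma filter_exists (β : Matrix (Fin 2) (Fin 2) ℂ) (hβ : β.IsHermitian) (htr : β.trace = 1)
    (D : ℝ) (hD : 0 < D) (hdet : β.det = (D : ℂ)) :
    ∃ F : Matrix (Fin 2) (Fin 2) ℂ, F * β * Fᴴ = (1 / 2 : ℂ) • 1 := by
  obtain ⟨Q, f, hQ, hβQ⟩ := spectral' β hβ
  have hQ' : Q * Qᴴ = 1 := mul_eq_one_comm.mp hQ
  have hdiag : Qᴴ * β * Q = diagonal (fun i => (f i : ℂ)) := by
    rw [Matrix.mul_assoc, hβQ, ← Matrix.mul_assoc, hQ, Matrix.one_mul]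
  have h1 : (f 0 : ℂ) + f 1 = 1 := by
    rw [← htr, ← Matrix.mul_one β, ← hQ', ← Matrix.mul_assoc, trace_mul_comm, ← Matrix.mul_assoc,
      hdiag]
    simp [Fin.sum_univ_two]
  have h2 : (f 0 : ℂ) * f 1 = D := by
    have := congrArg det hdiag
    rw [det_mul_right_comm, hQ, Matrix.one_mul, hdet] at this
    simpa using this.symm
  have h1' : f 0 + f 1 = 1 := by exact_mod_cast h1
  have h2' : f 0 * f 1 = D := by exact_mod_cast h2
  have hf0 : 0 < f 0 := by nlinarith
  have hf1 : 0 < f 1 := by nlinarith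
  have hf : ∀ i, 0 < f i := by
    intro i; fin_cases i
    · exact hf0
    · exact hf1
  refine ⟨diagonal (fun i => ((1 / Real.sqrt (2 * f i) : ℝ) : ℂ)) * Qᴴ, ?_⟩
  rw [conjTranspose_mul, conjTranspose_conjTranspose]
  have : ∀ A B C E : Matrix (Fin 2) (Fin 2) ℂ, A * B * β * (C * E) = A * (B * β * C) * E := by
    intros; simp only [Matrix.mul_assoc]
  rw [this, hdiag, diagonal_conjTranspose, diagonal_mul_diagonal, diagonal_mul_diagonal]
  ext i j
  by_cases hij : i = j
  · subst hij
    have hp := hf i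
    have hs : Real.sqrt (2 * f i) ≠ 0 := by positivity
    have hq : 1 / Real.sqrt (2 * f i) * f i * (1 / Real.sqrt (2 * f i)) = 1 / 2 := by
      field_simp
      rw [Real.sq_sqrt (by positivity)]
    simp only [diagonal_apply_eq, Matrix.smul_apply, one_apply_eq, Pi.star_apply, Complex.star_def,
      Complex.conj_ofReal, smul_eq_mul, mul_one]
    rw [← Complex.ofReal_mul, ← Complex.ofReal_mul, hq]
    norm_num
  · simp [hij]

lemma filter_gram (β F : Matrix (Fin 2) (Fin 2) ℂ) (hF : F * β * Fᴴ = (1 / 2 : ℂ) • 1)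
    (hdet : β.det ≠ 0) :
    Fᴴ * F = (1 / (2 * β.det)) • β.adjugate := by
  have h1 : (F * β) * ((2 : ℂ) • Fᴴ) = 1 := by
    rw [Matrix.mul_smul, hF, smul_smul]; norm_num
  have h2 := mul_eq_one_comm.mp h1
  have h3 : Fᴴ * F * β = (1 / 2 : ℂ) • 1 := by
    rw [← h2, Matrix.smul_mul, smul_smul, Matrix.mul_assoc]; norm_num
  have h4 := congrArg (fun M => M * β.adjugate) h3
  simp only [Matrix.mul_assoc, mul_adjugate, Matrix.mul_smul, Matrix.mul_one, Matrix.smul_mul,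
    Matrix.one_mul] at h4
  have h5 := congrArg (fun M => (1 / β.det) • M) h4
  simp only [smul_smul] at h5
  rw [one_div_mul_cancel hdet, one_smul] at h5
  rw [h5]
  congr 1
  field_simp

lemma filter_det (β F : Matrix (Fin 2) (Fin 2) ℂ) (hF : F * β * Fᴴ = (1 / 2 : ℂ) • 1)
    (D : ℝ) (hdet : β.det = (D : ℂ)) : ‖F.det‖ ^ 2 * D = 1 / 4 := by
  have := congrArg det hF
  rw [det_mul, det_mul, det_conjTranspose, hdet, det_smul] at this
  simp only [Fintype.card_fin, det_one, mul_one, Complex.star_def] at this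
  have h2 : (‖F.det‖ : ℂ) ^ 2 * D = 1 / 4 := by
    rw [← Complex.mul_conj']
    linear_combination this
  have h3 : ((‖F.det‖ ^ 2 * D : ℝ) : ℂ) = ((1 / 4 : ℝ) : ℂ) := by push_cast; exact h2
  exact_mod_cast h3

lemma sigma_conj (P : Matrix (Fin 2) (Fin 2) ℂ) : Pᵀ * pauli 2 * P = P.det • pauli 2 := by
  ext i j
  fin_cases i <;> fin_cases j <;>
    simp [mul_apply, Fin.sum_univ_two, pauli, det_fin_two] <;> ring

lemma kron_conj (P F : Matrix (Fin 2) (Fin 2) ℂ) :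
    (P ⊗ₖ F)ᵀ * (pauli 2 ⊗ₖ pauli 2) * (P ⊗ₖ F) = (P.det * F.det) • (pauli 2 ⊗ₖ pauli 2) := by
  rw [← kroneckerMap_transpose, ← mul_kronecker_mul, ← mul_kronecker_mul, sigma_conj, sigma_conj,
    smul_kronecker, kronecker_smul, smul_smul]

def trA (M : Matrix (Fin 2 × Fin 2) (Fin 2 × Fin 2) ℂ) : Matrix (Fin 2) (Fin 2) ℂ :=
  Matrix.of fun k l => M (0, k) (0, l) + M (1, k) (1, l)

def trB (M : Matrix (Fin 2 × Fin 2) (Fin 2 × Fin 2) ℂ) : Matrix (Fin 2) (Fin 2) ℂ :=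
  Matrix.of fun i j => M (i, 0) (j, 0) + M (i, 1) (j, 1)

def blk (M : Matrix (Fin 2 × Fin 2) (Fin 2 × Fin 2) ℂ) (i j : Fin 2) :
    Matrix (Fin 2) (Fin 2) ℂ := Matrix.of fun k l => M (i, k) (j, l)

lemma blk_conj (M : Matrix (Fin 2 × Fin 2) (Fin 2 × Fin 2) ℂ) (P F : Matrix (Fin 2) (Fin 2) ℂ)
    (i j : Fin 2) : blk ((P ⊗ₖ F) * M * (P ⊗ₖ F)ᴴ) i j =
      ∑ i', ∑ j', (P i i' * star (P j j')) • (F * blk M i' j' * Fᴴ) := by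
  ext k l
  simp [blk, mul_apply, Fintype.sum_prod_type, Fin.sum_univ_two]
  ring

lemma trA_eq (M : Matrix (Fin 2 × Fin 2) (Fin 2 × Fin 2) ℂ) :
    trA M = blk M 0 0 + blk M 1 1 := by ext; simp [trA, blk]

lemma trB_eq (M : Matrix (Fin 2 × Fin 2) (Fin 2 × Fin 2) ℂ) (i j : Fin 2) :
    trB M i j = (blk M i j).trace := by simp [trB, blk, trace, Fin.sum_univ_two]

lemma trA_conj (M : Matrix (Fin 2 × Fin 2) (Fin 2 × Fin 2) ℂ) (P F : Matrix (Fin 2) (Fin 2) ℂ)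
    (hP : Pᴴ * P = 1) : trA ((P ⊗ₖ F) * M * (P ⊗ₖ F)ᴴ) = F * trA M * Fᴴ := by
  have h : ∀ i j, P 0 i * star (P 0 j) + P 1 i * star (P 1 j) = if i = j then 1 else 0 := by
    intro i j
    have := congrFun (congrFun hP j) i
    simp only [mul_apply, Fin.sum_univ_two, conjTranspose_apply, one_apply] at this
    rw [mul_comm (P 0 i), mul_comm (P 1 i), this]
    simp only [eq_comm]
  rw [trA_eq, trA_eq, blk_conj, blk_conj, ← Finset.sum_add_distrib]
  simp only [← Finset.sum_add_distrib, ← add_smul, h]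
  simp [Fin.sum_univ_two, Matrix.mul_add, Matrix.add_mul]

lemma trB_conj (M : Matrix (Fin 2 × Fin 2) (Fin 2 × Fin 2) ℂ) (P F : Matrix (Fin 2) (Fin 2) ℂ) :
    trB ((P ⊗ₖ F) * M * (P ⊗ₖ F)ᴴ) =
      P * (Matrix.of fun i j => (Fᴴ * F * blk M i j).trace) * Pᴴ := by
  ext i j
  rw [trB_eq, blk_conj]
  simp only [trace_sum, trace_smul]
  have : ∀ i' j', (F * blk M i' j' * Fᴴ).trace = (Fᴴ * F * blk M i' j').trace := by
    intro i' j'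
    rw [trace_mul_comm, Matrix.mul_assoc]
  simp only [this]
  simp [mul_apply, Fin.sum_univ_two]
  ring

lemma blk_schur (M : Matrix (Fin 2 × Fin 2) (Fin 2 × Fin 2) ℂ) (P F S : Matrix (Fin 2) (Fin 2) ℂ)
    (i j : Fin 2) : blk ((P ⊗ₖ (S * F)) * M * (P ⊗ₖ (S * F))ᴴ) i j =
      S * blk ((P ⊗ₖ F) * M * (P ⊗ₖ F)ᴴ) i j * Sᴴ := by
  rw [blk_conj, blk_conj]
  simp only [Matrix.mul_sum, Matrix.sum_mul, Matrix.mul_smul, Matrix.smul_mul, conjTranspose_mul,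
    Matrix.mul_assoc]

lemma unitary_det (P : Matrix (Fin 2) (Fin 2) ℂ) (hP : Pᴴ * P = 1) : ‖P.det‖ = 1 := by
  have := congrArg det hP
  rw [det_mul, det_conjTranspose, det_one, Complex.star_def, Complex.conj_mul'] at this
  have h : ‖P.det‖ ^ 2 = 1 := by exact_mod_cast this
  nlinarith [norm_nonneg P.det]
lemma num_aux (x y z w e f c : ℝ) (hx : 0 ≤ x) (hz : 0 ≤ z) (hw : 0 ≤ w) (hy : 0 ≤ y)
    (a0 : x + w = 1 / 2) (a1 : z + y = 1 / 2) (b0 : x + z = e) (b1 : w + y = f)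
    (he1 : e + f = 1) (he2 : e * f = (1 - c ^ 2) / 4) :
    4 * (x * y) ≤ 1 - c := by
  have hsq : (e - f) ^ 2 = c ^ 2 := by
    linear_combination (e + f + 1) * he1 - 4 * he2
  have hx2 : x ≤ 1 / 2 := by linarith
  have hy2 : y ≤ 1 / 2 := by linarith
  rcases sq_eq_sq_iff_eq_or_eq_neg.mp hsq with h | h
  · have h1 : y ≤ (1 - c) / 2 := by linarith
    have := mul_le_mul hx2 h1 hy (by norm_num)
    linarith
  · have h1 : x ≤ (1 - c) / 2 := by linarith
    have := mul_le_mul h1 hy2 hy (by linarith)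
    linarith

lemma Theta_trace (ρ : Matrix (Fin 2 × Fin 2) (Fin 2 × Fin 2) ℂ) (hρ : ρ.IsHermitian)
    (μ ν : Fin 4) : (Theta ρ μ ν : ℂ) = (ρ * (pauli μ ⊗ₖ pauli ν)).trace := by
  have hp : ∀ μ, (pauli μ)ᴴ = pauli μ := by
    intro μ
    ext i j
    fin_cases μ <;> fin_cases i <;> fin_cases j <;> simp [pauli]
  have h : star (ρ * (pauli μ ⊗ₖ pauli ν)).trace = (ρ * (pauli μ ⊗ₖ pauli ν)).trace := by
    rw [← trace_conjTranspose, conjTranspose_mul, conjTranspose_kronecker, hp, hp, hρ.eq,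
      trace_mul_comm]
  simp only [Theta, of_apply]
  exact Complex.conj_eq_iff_re.mp h

lemma trace_expand (ρ K : Matrix (Fin 2 × Fin 2) (Fin 2 × Fin 2) ℂ) :
    (ρ * K).trace = ∑ i, ∑ j, ∑ k, ∑ l, ρ (i, j) (k, l) * K (k, l) (i, j) := by
  simp [trace, mul_apply, Fintype.sum_prod_type]

set_option maxHeartbeats 2000000 in
/-- Concurrence of any two-qubit state whose steering ellipsoid has centre of norm `c`
is at most `√(1−c)`: `λ₁ − λ₂ − λ₃ − λ₄ ≤ √(1 − ‖b‖²)·√(1 − ‖c_A‖)`. -/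
theorem stmt13 (ρ : Matrix (Fin 2 × Fin 2) (Fin 2 × Fin 2) ℂ)
    (hpsd : ρ.PosSemidef) (htr : ρ.trace = 1)
    (b : Fin 3 → ℝ) (hb : ∀ j, b j = Theta ρ 0 j.succ)
    (hb1 : norm3 b < 1)
    (γb : ℝ) (hγb : γb = 1 / Real.sqrt (1 - norm3 b ^ 2))
    (cA : Fin 3 → ℝ)
    (hcA : ∀ i, cA i = γb ^ 2 * (Theta ρ i.succ 0 - ∑ j, Theta ρ i.succ j.succ * b j))
    (lam : Fin 4 → ℝ)
    (h01 : lam 1 ≤ lam 0) (h12 : lam 2 ≤ lam 1) (h23 : lam 3 ≤ lam 2) (h3 : 0 ≤ lam 3)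
    (hchar : (ρ * spinFlip ρ).charpoly = ∏ i : Fin 4, (X - C ((lam i : ℂ) ^ 2))) :
    lam 0 - lam 1 - lam 2 - lam 3
      ≤ Real.sqrt (1 - norm3 b ^ 2) * Real.sqrt (1 - norm3 cA) := by
  
  have hH : ρ.IsHermitian := hpsd.1
  have hl : ∀ i, 0 ≤ lam i := by
    intro i
    fin_cases i
    · exact h3.trans (h23.trans (h12.trans h01))
    · exact h3.trans (h23.trans h12)
    · exact h3.trans h23
    · exact h3
  have hbn : norm3 b ^ 2 = b 0 ^ 2 + b 1 ^ 2 + b 2 ^ 2 := by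
    rw [norm3, Real.sq_sqrt (by positivity), Fin.sum_univ_three]
  have hcn : norm3 cA ^ 2 = cA 0 ^ 2 + cA 1 ^ 2 + cA 2 ^ 2 := by
    rw [norm3, Real.sq_sqrt (by positivity), Fin.sum_univ_three]
  have hbnn : 0 ≤ norm3 b := Real.sqrt_nonneg _
  have hcnn : 0 ≤ norm3 cA := Real.sqrt_nonneg _
  have hpos : 0 < 1 - norm3 b ^ 2 := by nlinarith
  set N := 1 - norm3 b ^ 2 with hN
  have hγ : γb ^ 2 = 1 / N := by
    rw [hγb, div_pow, Real.sq_sqrt hpos.le, one_pow]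
  -- reduced state of Bob
  have htr' : ρ (0, 0) (0, 0) + ρ (0, 1) (0, 1) + ρ (1, 0) (1, 0) + ρ (1, 1) (1, 1) = 1 := by
    rw [← htr]
    simp [trace, Fintype.sum_prod_type, Fin.sum_univ_two]
    ring
  have hb0 : (b 0 : ℂ) = trA ρ 0 1 + trA ρ 1 0 := by
    rw [hb, Theta_trace ρ hH, trace_expand]
    simp [Fin.sum_univ_two, pauli, kroneckerMap_apply, trA]
    ring
  have hb1' : (b 1 : ℂ) = Complex.I * (trA ρ 0 1 - trA ρ 1 0) := by
    rw [hb, Theta_trace ρ hH, trace_expand]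
    simp [Fin.sum_univ_two, pauli, kroneckerMap_apply, trA]
    ring
  have hb2 : (b 2 : ℂ) = trA ρ 0 0 - trA ρ 1 1 := by
    rw [hb, Theta_trace ρ hH, trace_expand]
    simp [Fin.sum_univ_two, pauli, kroneckerMap_apply, trA]
    ring
  have hβtr : trA ρ 0 0 + trA ρ 1 1 = 1 := by
    rw [← htr']; simp [trA]; ring
  have hI : Complex.I ^ 2 = -1 := Complex.I_sq
  have hβdet : (trA ρ).det = ((N / 4 : ℝ) : ℂ) := by
    rw [det_fin_two, hN, hbn]
    push_cast
    rw [hb0, hb1', hb2]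
    linear_combination (1 / 4) * (trA ρ 0 0 + trA ρ 1 1 + 1) * hβtr +
      (1 / 4) * (trA ρ 0 1 - trA ρ 1 0) ^ 2 * hI
  have hβH : (trA ρ).IsHermitian := by
    ext k l
    simp only [trA, conjTranspose_apply, of_apply, star_add]
    rw [hH.apply, hH.apply]
  obtain ⟨F0, hF0⟩ := filter_exists (trA ρ) hβH (by rw [trace_fin_two]; exact hβtr) (N / 4)
    (by positivity) hβdet
  have hβdet0 : (trA ρ).det ≠ 0 := by
    rw [hβdet]; exact_mod_cast (by positivity : N / 4 ≠ 0)
  have hG := filter_gram _ F0 hF0 hβdet0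
  have hFd := filter_det _ F0 hF0 _ hβdet
  -- state of Alice after filtering
  set α : Matrix (Fin 2) (Fin 2) ℂ := Matrix.of fun i j => (F0ᴴ * F0 * blk ρ i j).trace with hα
  have hNc : (N : ℂ) ≠ 0 := by exact_mod_cast hpos.ne'
  have hαe : ∀ i j, (N : ℂ) * α i j = 2 * (trA ρ 1 1 * ρ (i, 0) (j, 0) - trA ρ 0 1 * ρ (i, 1) (j, 0)
      - trA ρ 1 0 * ρ (i, 0) (j, 1) + trA ρ 0 0 * ρ (i, 1) (j, 1)) := by
    intro i j
    rw [hα, of_apply, hG, hβdet, adjugate_fin_two, Matrix.smul_mul, trace_smul, trace_fin_two]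
    simp [mul_apply, Fin.sum_univ_two, blk]
    field_simp
    ring
  have hcNe : ∀ i, (N : ℂ) * cA i = (Theta ρ i.succ 0 : ℂ) - ∑ j, (Theta ρ i.succ j.succ : ℂ) * b j := by
    intro i
    rw [hcA, hγ]
    push_cast
    field_simp
  have hβ00 : trA ρ 0 0 = (1 + b 2) / 2 := by linear_combination (hβtr - hb2) / 2
  have hβ11 : trA ρ 1 1 = (1 - b 2) / 2 := by linear_combination (hβtr + hb2) / 2
  have hβ01 : trA ρ 0 1 = (b 0 - Complex.I * b 1) / 2 := by
    linear_combination (-hb0 + Complex.I * hb1') / 2 + (trA ρ 0 1 - trA ρ 1 0) / 2 * hI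
  have hβ10 : trA ρ 1 0 = (b 0 + Complex.I * b 1) / 2 := by
    linear_combination (-hb0 - Complex.I * hb1') / 2 - (trA ρ 0 1 - trA ρ 1 0) / 2 * hI
  have hc0 : (cA 0 : ℂ) = α 0 1 + α 1 0 := by
    apply mul_left_cancel₀ hNc
    rw [mul_add, hαe, hαe, hcNe, hβ00, hβ11, hβ01, hβ10, Fin.sum_univ_three]
    simp only [Theta_trace ρ hH, trace_expand]
    simp [Fin.sum_univ_two, pauli, kroneckerMap_apply]
    ring
  have hc1 : (cA 1 : ℂ) = Complex.I * (α 0 1 - α 1 0) := by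
    apply mul_left_cancel₀ hNc
    rw [mul_left_comm, mul_sub, hαe, hαe, hcNe, hβ00, hβ11, hβ01, hβ10, Fin.sum_univ_three]
    simp only [Theta_trace ρ hH, trace_expand]
    simp [Fin.sum_univ_two, pauli, kroneckerMap_apply]
    linear_combination (ρ (0, 0) (1, 1) - ρ (0, 1) (1, 0) - ρ (1, 0) (0, 1) + ρ (1, 1) (0, 0)) *
      (b 1 : ℂ) * hI
  have hc2 : (cA 2 : ℂ) = α 0 0 - α 1 1 := by
    apply mul_left_cancel₀ hNc
    rw [mul_sub, hαe, hαe, hcNe, hβ00, hβ11, hβ01, hβ10, Fin.sum_univ_three]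
    simp only [Theta_trace ρ hH, trace_expand]
    simp [Fin.sum_univ_two, pauli, kroneckerMap_apply]
    ring
  have hαtr : α 0 0 + α 1 1 = 1 := by
    apply mul_left_cancel₀ hNc
    rw [mul_add, hαe, hαe]
    have h4 : (N : ℂ) = 4 * (trA ρ).det := by rw [hβdet]; push_cast; ring
    rw [mul_one, h4, det_fin_two]
    simp only [trA, of_apply]
    ring
  have hαdet : α.det = (((1 - norm3 cA ^ 2) / 4 : ℝ) : ℂ) := by
    rw [det_fin_two, hcn]
    push_cast
    rw [hc0, hc1, hc2]
    linear_combination (1 / 4) * (α 0 0 + α 1 1 + 1) * hαtr +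
      (1 / 4) * (α 0 1 - α 1 0) ^ 2 * hI
  have hαH : α.IsHermitian := by
    ext i j
    simp only [hα, conjTranspose_apply, of_apply]
    rw [← trace_conjTranspose, conjTranspose_mul, conjTranspose_mul, conjTranspose_conjTranspose,
      trace_mul_comm]
    congr 2
    ext k l
    simp only [blk, conjTranspose_apply, of_apply]
    rw [hH.apply]
  obtain ⟨Q, e, hQ, hαQ⟩ := spectral' α hαH
  have hQ' : Q * Qᴴ = 1 := mul_eq_one_comm.mp hQ
  have hdiag : Qᴴ * α * Q = diagonal (fun i => (e i : ℂ)) := by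
    rw [Matrix.mul_assoc, hαQ, ← Matrix.mul_assoc, hQ, Matrix.one_mul]
  have he1 : (e 0 : ℂ) + e 1 = 1 := by
    rw [← hαtr, ← trace_fin_two, ← Matrix.mul_one α, ← hQ', ← Matrix.mul_assoc, trace_mul_comm,
      ← Matrix.mul_assoc, hdiag]
    simp [Fin.sum_univ_two]
  have he2 : (e 0 : ℂ) * e 1 = (((1 - norm3 cA ^ 2) / 4 : ℝ) : ℂ) := by
    have := congrArg det hdiag
    rw [det_mul_right_comm, hQ, Matrix.one_mul, hαdet] at this
    simpa using this.symm
  have he1' : e 0 + e 1 = 1 := by exact_mod_cast he1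
  have he2' : e 0 * e 1 = (1 - norm3 cA ^ 2) / 4 := by exact_mod_cast he2
  -- choice of the basis of Bob
  obtain ⟨S, hS, hS0⟩ := schur2 (blk ((Qᴴ ⊗ₖ F0) * ρ * (Qᴴ ⊗ₖ F0)ᴴ) 0 1)
  have hS' : S * Sᴴ = 1 := mul_eq_one_comm.mp hS
  rw [← blk_schur] at hS0
  have hkey := key ρ hpsd lam hl hchar (Qᴴ ⊗ₖ (S * F0)) _ (kron_conj _ _) hS0
  have htA := trA_conj ρ Qᴴ (S * F0) (by rw [conjTranspose_conjTranspose, hQ'])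
  have htB := trB_conj ρ Qᴴ (S * F0)
  have hFF : (S * F0)ᴴ * (S * F0) = F0ᴴ * F0 := by
    rw [conjTranspose_mul, Matrix.mul_assoc, ← Matrix.mul_assoc Sᴴ, hS, Matrix.one_mul]
  have hFβ : (S * F0) * trA ρ * (S * F0)ᴴ = (1 / 2 : ℂ) • 1 := by
    have : (S * F0) * trA ρ * (S * F0)ᴴ = S * (F0 * trA ρ * F0ᴴ) * Sᴴ := by
      rw [conjTranspose_mul]; simp only [Matrix.mul_assoc]
    rw [this, hF0, Matrix.mul_smul, Matrix.smul_mul, Matrix.mul_one, hS']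
  rw [hFβ] at htA
  rw [hFF, ← hα, conjTranspose_conjTranspose, hdiag] at htB
  have hpsd' := hpsd.mul_mul_conjTranspose_same (Qᴴ ⊗ₖ (S * F0))
  set M := (Qᴴ ⊗ₖ (S * F0)) * ρ * (Qᴴ ⊗ₖ (S * F0))ᴴ with hM
  have hnn : ∀ p, 0 ≤ (M p p).re := fun p => (Complex.le_def.mp (hpsd'.diag_nonneg (i := p))).1
  have hδ : ‖(Qᴴ).det * (S * F0).det‖ = ‖F0.det‖ := by
    rw [norm_mul, det_mul, norm_mul, unitary_det S hS,
      unitary_det Qᴴ (by rw [conjTranspose_conjTranspose, hQ']), one_mul, one_mul]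
  rw [hδ] at hkey
  have a0 : (M (0, 0) (0, 0)).re + (M (1, 0) (1, 0)).re = 1 / 2 := by
    have := congrArg Complex.re (congrFun (congrFun htA 0) 0)
    simpa [trA] using this
  have a1 : (M (0, 1) (0, 1)).re + (M (1, 1) (1, 1)).re = 1 / 2 := by
    have := congrArg Complex.re (congrFun (congrFun htA 1) 1)
    simpa [trA] using this
  have b0 : (M (0, 0) (0, 0)).re + (M (0, 1) (0, 1)).re = e 0 := by
    have := congrArg Complex.re (congrFun (congrFun htB 0) 0)
    simpa [trB] using this
  have b1 : (M (1, 0) (1, 0)).re + (M (1, 1) (1, 1)).re = e 1 := by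
    have := congrArg Complex.re (congrFun (congrFun htB 1) 1)
    simpa [trB] using this
  have n00 := hnn (0, 0)
  have n01 := hnn (0, 1)
  have n10 := hnn (1, 0)
  have n11 := hnn (1, 1)
  generalize (M (0, 0) (0, 0)).re = x at *
  generalize (M (0, 1) (0, 1)).re = z at *
  generalize (M (1, 0) (1, 0)).re = w at *
  generalize (M (1, 1) (1, 1)).re = y at *
  generalize norm3 cA = c at *
  have hxy : 4 * (x * y) ≤ 1 - c := num_aux x y z w (e 0) (e 1) c n00 n01 n10 n11 a0 a1 b0 b1 he1' he2'
  have hsN : Real.sqrt N * ‖F0.det‖ = 1 := by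
    have h1 : (Real.sqrt N * ‖F0.det‖) ^ 2 = 1 := by
      rw [mul_pow, Real.sq_sqrt hpos.le]; linarith
    have h2 : 0 ≤ Real.sqrt N * ‖F0.det‖ := by positivity
    nlinarith
  have hfin : 2 * (Real.sqrt x * Real.sqrt y) ≤ Real.sqrt (1 - c) := by
    apply Real.le_sqrt_of_sq_le
    rw [mul_pow, mul_pow, Real.sq_sqrt n00, Real.sq_sqrt n11]
    linarith
  calc lam 0 - lam 1 - lam 2 - lam 3
      = Real.sqrt N * (‖F0.det‖ * (lam 0 - lam 1 - lam 2 - lam 3)) := by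
        rw [← mul_assoc, hsN, one_mul]
    _ ≤ _ := by gcongr; exact hkey.trans hfin
end
end
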